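/- arXiv:math/0503259 — 2 statements merged into one kernel-verified Lean document; each statement's English description precedes it below -/
import Mathlib

section
/- Let F_1,…,F_{n+1} ∈ ℂ[z_1,…,z_n] be polynomials of degrees d_1,…,d_{n+1} whose homogenizations have no common zero in ℙ^n (i.e., no common zeros in ℂ^n and none at infinity). Then there exist polynomials Q_j with Σ_{j=1}^{n+1} F_j Q_j = 1 and deg(F_j Q_j) ≤ d_1 + ⋯ + d_{n+1} − n for each j. -/
open MvPolynomial

/-- The `d`-homogenization of `F ∈ ℂ[z_1,…,z_n]`. -/
noncomputable def homogenize (n d : ℕ) (F : MvPolynomial (Fin n) ℂ) :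
    MvPolynomial (Fin (n + 1)) ℂ :=
  ∑ s ∈ F.support,
    monomial (Finsupp.cons (d - s.sum fun _ e => e) s) (MvPolynomial.coeff s F)


namespace Mac
variable {N : ℕ}

/-- An ideal closed under taking homogeneous components. -/
def HI (J : Ideal (MvPolynomial (Fin N) ℂ)) : Prop := ∀ p ∈ J, ∀ n, homogeneousComponent n p ∈ J

lemma comp_mul {a q : MvPolynomial (Fin N) ℂ} {d : ℕ} (ha : a.IsHomogeneous d) (k : ℕ) :
    homogeneousComponent (d + k) (a * q) = a * homogeneousComponent k q := by
  conv_lhs => rw [← sum_homogeneousComponent q]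
  rw [Finset.mul_sum, map_sum]
  have h : ∀ i, homogeneousComponent (d + k) (a * homogeneousComponent i q)
      = if k = i then a * homogeneousComponent i q else 0 := by
    intro i
    rw [homogeneousComponent_of_mem (n := d + i)
      (ha.mul (homogeneousComponent_isHomogeneous i q))]
    simp
  simp only [h]
  rw [Finset.sum_ite_eq]
  split_ifs with hk
  · rfl
  · rw [homogeneousComponent_eq_zero, mul_zero]
    simpa using hk

lemma comp_mul_lt {a q : MvPolynomial (Fin N) ℂ} {d : ℕ} (ha : a.IsHomogeneous d) {e : ℕ} (he : e < d) :
    homogeneousComponent e (a * q) = 0 := by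
  conv_lhs => rw [← sum_homogeneousComponent q]
  rw [Finset.mul_sum, map_sum]
  apply Finset.sum_eq_zero
  intro i _
  rw [homogeneousComponent_of_mem (n := d + i)
      (ha.mul (homogeneousComponent_isHomogeneous i q)), if_neg (by omega)]

lemma HI_span (s : Set (MvPolynomial (Fin N) ℂ)) (hs : ∀ x ∈ s, ∃ d, x.IsHomogeneous d) : HI (Ideal.span s) := by
  intro p hp n
  induction hp using Submodule.span_induction with
  | mem x hx =>
    obtain ⟨d, hd⟩ := hs x hx
    rw [homogeneousComponent_of_mem hd]
    split_ifs
    · exact Ideal.subset_span hx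
    · exact Ideal.zero_mem _
  | zero => simp
  | add x y _ _ hx hy => rw [map_add]; exact Ideal.add_mem _ hx hy
  | smul r x hx ih =>
    clear ih
    induction hx using Submodule.span_induction generalizing r with
    | mem x hx =>
      obtain ⟨d, hd⟩ := hs x hx
      rw [smul_eq_mul, mul_comm]
      by_cases h : n < d
      · rw [comp_mul_lt hd h]; exact Ideal.zero_mem _
      · obtain ⟨k, rfl⟩ := Nat.exists_eq_add_of_le (not_lt.1 h)
        rw [comp_mul hd]
        exact Ideal.mul_mem_right _ _ (Ideal.subset_span hx)
    | zero => simp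
    | add x y _ _ hx hy => rw [smul_add, map_add]; exact Ideal.add_mem _ (hx r) (hy r)
    | smul r' x _ ih => rw [smul_smul]; exact ih _

/-- Homogeneous division. -/
lemma hdiv {J : Ideal (MvPolynomial (Fin N) ℂ)} (hJ : HI J) {g h : MvPolynomial (Fin N) ℂ} {d e : ℕ} (hg : g.IsHomogeneous d)
    (hh : h.IsHomogeneous e) (hm : h ∈ Ideal.span {g} ⊔ J) :
    ∃ k, h - g * k ∈ J ∧ (k = 0 ∨ ∃ k', d + k' = e ∧ k.IsHomogeneous k') := by
  obtain ⟨x, hx, y, hy, rfl⟩ := Submodule.mem_sup.1 hm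
  obtain ⟨q, rfl⟩ := Ideal.mem_span_singleton'.1 hx
  have h2 := hJ y hy e
  have h3 : homogeneousComponent e y = (q * g + y) - homogeneousComponent e (g * q) := by
    have := homogeneousComponent_eq_self hh
    rw [map_add] at this
    rw [← this, mul_comm]; ring
  by_cases h : e < d
  · refine ⟨0, ?_, Or.inl rfl⟩
    rw [comp_mul_lt hg h] at h3
    simpa [← h3] using h2
  · obtain ⟨k, rfl⟩ := Nat.exists_eq_add_of_le (not_lt.1 h)
    rw [comp_mul hg] at h3
    exact ⟨homogeneousComponent k q, h3 ▸ h2, Or.inr ⟨k, rfl, homogeneousComponent_isHomogeneous k q⟩⟩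

/-- Nonzerodivisor modulo an ideal. -/
def NZ (f : MvPolynomial (Fin N) ℂ) (J : Ideal (MvPolynomial (Fin N) ℂ)) : Prop := ∀ v, f * v ∈ J → v ∈ J

/-- Graded Nakayama step. -/
lemma nakayama {J : Ideal (MvPolynomial (Fin N) ℂ)} (hJ : HI J) {f a : MvPolynomial (Fin N) ℂ} {d e : ℕ} (hf : f.IsHomogeneous d)
    (ha : a.IsHomogeneous e) (he : 0 < e) (h1 : NZ f (Ideal.span {a} ⊔ J)) (h2 : NZ a J) :
    NZ f J := by
  have key : ∀ m, ∀ v : MvPolynomial (Fin N) ℂ, v.IsHomogeneous m → f * v ∈ J → v ∈ J := by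
    intro m
    induction m using Nat.strong_induction_on with
    | _ m ih =>
      intro v hv hfv
      obtain ⟨k, hk, h⟩ := hdiv hJ ha hv (h1 v (Ideal.mem_sup_right hfv))
      have hkJ : k ∈ J := by
        rcases h with rfl | ⟨k', hk', hkh⟩
        · exact J.zero_mem
        · apply ih k' (by omega) k hkh
          apply h2
          have : a * (f * k) = f * v - f * (v - a * k) := by ring
          rw [this]
          exact J.sub_mem hfv (J.mul_mem_left _ hk)
      have : v = (v - a * k) + a * k := by ring
      rw [this]
      exact J.add_mem hk (J.mul_mem_left _ hkJ)
  intro v hv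
  rw [← sum_homogeneousComponent v]
  apply J.sum_mem
  intro i _
  apply key i _ (homogeneousComponent_isHomogeneous i v)
  rw [← comp_mul hf]
  exact hJ _ hv _

/-- All permutations regular. -/
def SR (a : Fin N → MvPolynomial (Fin N) ℂ) : Prop := ∀ T : Set (Fin N), ∀ i ∉ T, NZ (a i) (Ideal.span (a '' T))

lemma span_insert_image (a : Fin N → MvPolynomial (Fin N) ℂ) (T : Set (Fin N)) (k : Fin N) :
    Ideal.span (a '' (insert k T)) = Ideal.span {a k} ⊔ Ideal.span (a '' T) := by
  rw [Set.image_insert_eq, Ideal.span_insert]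

lemma update_image_notMem (a : Fin N → MvPolynomial (Fin N) ℂ) {i : Fin N} (f : MvPolynomial (Fin N) ℂ) {T : Set (Fin N)} (h : i ∉ T) :
    (Function.update a i f) '' T = a '' T := by
  apply Set.image_congr
  intro x hx
  exact Function.update_of_ne (by rintro rfl; exact h hx) _ _

lemma exchange {a : Fin N → MvPolynomial (Fin N) ℂ} {d : Fin N → ℕ} (ha : ∀ i, (a i).IsHomogeneous (d i))
    (hd : ∀ i, 0 < d i) (hSR : SR a) (i : Fin N) {f : MvPolynomial (Fin N) ℂ} {e : ℕ} (hf : f.IsHomogeneous e)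
    (h : NZ f (Ideal.span (a '' {i}ᶜ))) : SR (Function.update a i f) := by
  have hHI : ∀ T, HI (Ideal.span (a '' T)) := fun T => HI_span _ (by
    rintro _ ⟨j, _, rfl⟩; exact ⟨_, ha j⟩)
  have step1 : ∀ n : ℕ, ∀ T : Set (Fin N), i ∉ T → (Tᶜ).ncard = n →
      NZ f (Ideal.span (a '' T)) := by
    intro n
    induction n with
    | zero =>
      intro T hi hn
      rw [Set.ncard_eq_zero] at hn
      exact absurd (show i ∈ Tᶜ from hi) (by simp [hn])
    | succ n ih =>
      intro T hi hn
      by_cases hT : T = {i}ᶜ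
      · rw [hT]; exact h
      · obtain ⟨k, hk, hki⟩ : ∃ k, k ∉ T ∧ k ≠ i := by
          by_contra! hcon
          apply hT
          ext x
          simp only [Set.mem_compl_iff, Set.mem_singleton_iff]
          constructor
          · rintro hx rfl; exact hi hx
          · intro hx; by_contra hx'; exact hx (hcon x hx')
        have h3 : NZ f (Ideal.span (a '' (insert k T))) := by
          apply ih
          · simp only [Set.mem_insert_iff, not_or]; exact ⟨hki.symm, hi⟩
          · have : (insert k T)ᶜ = Tᶜ \ {k} := by
              ext x; simp [and_comm]
            rw [this, Set.ncard_sdiff_singleton_of_mem (show k ∈ Tᶜ from hk), hn]; rfl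
        rw [span_insert_image] at h3
        exact nakayama (hHI T) hf (ha k) (hd k) h3 (hSR T k hk)
  intro T k hk
  by_cases hi : i ∈ T
  · have hki : k ≠ i := by rintro rfl; exact hk hi
    rw [Function.update_of_ne hki]
    obtain ⟨T', hiT', rfl⟩ : ∃ T', i ∉ T' ∧ T = insert i T' :=
      ⟨T \ {i}, by simp, by simp [Set.insert_eq_of_mem hi]⟩
    rw [span_insert_image, update_image_notMem _ _ hiT', Function.update_self]
    have hkT' : k ∉ T' := fun h => hk (Set.mem_insert_of_mem _ h)
    intro v hv
    obtain ⟨x, hx, y, hy, hxy⟩ := Submodule.mem_sup.1 hv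
    obtain ⟨w, rfl⟩ := Ideal.mem_span_singleton'.1 hx
    have h4 := step1 _ (insert k T') (by
      simp only [Set.mem_insert_iff, not_or]; exact ⟨hki.symm, hiT'⟩) rfl w (by
        rw [span_insert_image]
        have : f * w = v * a k - y := by linear_combination hxy
        rw [this]
        exact Ideal.sub_mem _ (Ideal.mem_sup_left (Ideal.mul_mem_left _ _
          (Ideal.mem_span_singleton_self _))) (Ideal.mem_sup_right hy))
    rw [span_insert_image] at h4
    obtain ⟨x', hx', y', hy', hxy'⟩ := Submodule.mem_sup.1 h4
    obtain ⟨w', rfl⟩ := Ideal.mem_span_singleton'.1 hx'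
    have h5 : v - f * w' ∈ Ideal.span (a '' T') := by
      apply hSR T' k hkT'
      have : a k * (v - f * w') = y + f * y' := by
        linear_combination (-1) * hxy - f * hxy'
      rw [this]
      exact Ideal.add_mem _ hy (Ideal.mul_mem_left _ _ hy')
    have : v = w' * f + (v - f * w') := by ring
    rw [this]
    exact Ideal.add_mem _ (Ideal.mem_sup_left (Ideal.mul_mem_left _ _
          (Ideal.mem_span_singleton_self _))) (Ideal.mem_sup_right h5)
  · rw [update_image_notMem _ _ hi]
    by_cases hki : k = i
    · subst hki
      rw [Function.update_self]
      exact step1 _ T hi rfl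
    · rw [Function.update_of_ne hki]
      exact hSR T k hk

lemma SR_X : SR (X : Fin N → MvPolynomial (Fin N) ℂ) := by
  intro T i hi v hv
  rw [mem_ideal_span_X_image] at hv ⊢
  intro m hm
  obtain ⟨j, hj, hne⟩ := hv (Finsupp.single i 1 + m) (by
    rw [mem_support_iff, coeff_X_mul]; exact mem_support_iff.1 hm)
  refine ⟨j, hj, ?_⟩
  have : i ≠ j := by rintro rfl; exact hi hj
  simpa [Finsupp.single_apply, this] using hne

/-- Only the trivial common zero. -/
def V0 (a : Fin N → MvPolynomial (Fin N) ℂ) : Prop := ∀ z : Fin N → ℂ, (∀ j, eval z (a j) = 0) → z = 0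

/-- The degree bound. -/
def PB (a : Fin N → MvPolynomial (Fin N) ℂ) (d : Fin N → ℕ) : Prop :=
  ∀ e, ∑ i, d i < e + N → ∀ h : MvPolynomial (Fin N) ℂ, h.IsHomogeneous e → h ∈ Ideal.span (Set.range a)

lemma linear_form {l : MvPolynomial (Fin N) ℂ} (hl : l.IsHomogeneous 1) : ∃ c : Fin N → ℂ, l = ∑ i, c i • X i := by
  have : l ∈ Submodule.span ℂ (Set.range (X : Fin N → MvPolynomial (Fin N) ℂ)) := by
    rw [← homogeneousSubmodule_one_eq_span_X]; exact hl
  obtain ⟨c, hc⟩ := (Submodule.mem_span_range_iff_exists_fun ℂ).1 this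
  exact ⟨c, hc.symm⟩

lemma homog_mem_span_X {h : MvPolynomial (Fin N) ℂ} {e : ℕ} (hh : h.IsHomogeneous e) (he : 0 < e) :
    h ∈ Ideal.span (Set.range (X : Fin N → MvPolynomial (Fin N) ℂ)) := by
  rw [← Set.image_univ, mem_ideal_span_X_image]
  intro m hm
  by_contra! hcon
  have : m = 0 := by ext j; exact hcon j (Set.mem_univ _)
  have h2 := hh.coeff_eq_zero (d := m) (by simp [this]; omega)
  exact mem_support_iff.1 hm h2

lemma base {a : Fin N → MvPolynomial (Fin N) ℂ} (ha : ∀ i, (a i).IsHomogeneous 1) (hV : V0 a) :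
    SR a ∧ PB a (fun _ => 1) := by
  choose c hc using fun i => linear_form (ha i)
  let M : Matrix (Fin N) (Fin N) ℂ := c
  have hev : ∀ z i, eval z (a i) = M.mulVec z i := by
    intro z i
    rw [hc]
    simp [Matrix.mulVec, dotProduct, M]
  have hinj : Function.Injective M.mulVec := by
    intro z w hzw
    have : z - w = 0 := by
      apply hV
      intro j
      rw [hev, Matrix.mulVec_sub, hzw]; simp
    exact sub_eq_zero.1 this
  have hu : IsUnit M := Matrix.mulVec_injective_iff_isUnit.1 hinj
  have hinv : M⁻¹ * M = 1 := Matrix.nonsing_inv_mul _ ((Matrix.isUnit_iff_isUnit_det _).1 hu)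
  have hX : ∀ i, (X i : MvPolynomial (Fin N) ℂ) = ∑ j, M⁻¹ i j • a j := by
    intro i
    simp_rw [hc, Finset.smul_sum, smul_smul]
    rw [Finset.sum_comm]
    simp_rw [← Finset.sum_smul]
    have : ∀ k, ∑ j, M⁻¹ i j * c j k = (1 : Matrix (Fin N) (Fin N) ℂ) i k := by
      intro k; rw [← hinv]; rfl
    simp [this, Matrix.one_apply]
  have hspan : Ideal.span (Set.range (X : Fin N → MvPolynomial (Fin N) ℂ)) ≤ Ideal.span (Set.range a) := by
    rw [Ideal.span_le]
    rintro _ ⟨i, rfl⟩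
    rw [hX]
    apply Ideal.sum_mem
    intro j _
    rw [MvPolynomial.smul_eq_C_mul]
    exact Ideal.mul_mem_left _ _ (Ideal.subset_span ⟨j, rfl⟩)
  let φ : (MvPolynomial (Fin N) ℂ) →ₐ[ℂ] (MvPolynomial (Fin N) ℂ) := aeval a
  have hsurj : Function.Surjective φ := by
    rw [← AlgHom.range_eq_top, eq_top_iff, ← MvPolynomial.adjoin_range_X, Algebra.adjoin_le_iff]
    rintro _ ⟨i, rfl⟩
    refine ⟨∑ j, M⁻¹ i j • X j, ?_⟩
    change φ _ = _
    rw [hX, map_sum]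
    simp [φ]
  have hinv' : M * M⁻¹ = 1 := Matrix.mul_nonsing_inv _ ((Matrix.isUnit_iff_isUnit_det _).1 hu)
  have hφinj : Function.Injective φ := by
    let χ : (MvPolynomial (Fin N) ℂ) →ₐ[ℂ] (MvPolynomial (Fin N) ℂ) := aeval (fun i => ∑ j, M⁻¹ i j • X j)
    have : χ.comp φ = AlgHom.id ℂ _ := by
      apply MvPolynomial.algHom_ext
      intro i
      have h1 : (χ.comp φ) (X i) = ∑ j, c i j • ∑ k, M⁻¹ j k • X k := by
        simp [χ, φ, hc]
      rw [h1]
      simp_rw [Finset.smul_sum, smul_smul]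
      rw [Finset.sum_comm]
      simp_rw [← Finset.sum_smul]
      have : ∀ k, ∑ j, c i j * M⁻¹ j k = (1 : Matrix (Fin N) (Fin N) ℂ) i k := by
        intro k; rw [← hinv']; rfl
      simp [this, Matrix.one_apply]
    intro x y hxy
    have h2 := congrArg χ hxy
    rw [← AlgHom.comp_apply, ← AlgHom.comp_apply, this] at h2
    exact h2
  refine ⟨?_, ?_⟩
  · let ψ := AlgEquiv.ofBijective φ ⟨hφinj, hsurj⟩
    intro T i hi v hv
    have himg : a '' T = ψ '' (X '' T) := by
      rw [Set.image_image]
      apply Set.image_congr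
      intro x _
      simp [ψ, φ]
    have hmem : ∀ w : MvPolynomial (Fin N) ℂ, ψ w ∈ Ideal.span (a '' T) ↔ w ∈ Ideal.span (X '' T : Set (MvPolynomial (Fin N) ℂ)) := by
      intro w
      rw [himg, ← Ideal.map_span, ← Ideal.mem_comap,
        Ideal.comap_map_of_bijective _ ψ.bijective]
    obtain ⟨w, rfl⟩ := ψ.surjective v
    have : a i = ψ (X i) := by simp [ψ, φ]
    rw [this, ← map_mul, hmem] at hv
    rw [hmem]
    exact SR_X T i hi w hv
  · intro e he h hh
    apply hspan
    apply homog_mem_span_X hh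
    simp at he
    omega

lemma mem_span_X_of_eval {h : MvPolynomial (Fin N) ℂ} (hh : eval 0 h = 0) :
    h ∈ Ideal.span (Set.range (X : Fin N → MvPolynomial (Fin N) ℂ)) := by
  rw [← Set.image_univ, mem_ideal_span_X_image]
  intro m hm
  by_contra! hcon
  have : m = 0 := by ext j; exact hcon j (Set.mem_univ _)
  subst this
  apply mem_support_iff.1 hm
  rw [← constantCoeff_eq, ← eval_zero]
  exact hh

lemma null {a : Fin N → MvPolynomial (Fin N) ℂ} (hV : V0 a) {h : MvPolynomial (Fin N) ℂ} (hh : eval 0 h = 0) :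
    h ∈ (Ideal.span (Set.range a)).radical := by
  rw [← vanishingIdeal_zeroLocus_eq_radical (K := ℂ), mem_vanishingIdeal_iff]
  intro z hz
  have : z = 0 := hV z fun j => by
    have := hz (a j) (Ideal.subset_span ⟨j, rfl⟩)
    simpa using this
  subst this
  simpa using hh

lemma eval_zero_of_homog {f : MvPolynomial (Fin N) ℂ} {d : ℕ} (hf : f.IsHomogeneous d) (hd : 0 < d) :
    eval 0 f = 0 := by
  have h1 : eval 0 f = coeff 0 f := by
    rw [← constantCoeff_eq, eval_zero]
  rw [h1]
  exact hf.coeff_eq_zero (by simp; omega)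

/-- Restriction to the line through `z`. -/
noncomputable def line (z : Fin N → ℂ) : (MvPolynomial (Fin N) ℂ) →ₐ[ℂ] Polynomial ℂ :=
  aeval fun i => Polynomial.C (z i) * Polynomial.X

lemma line_homog (z : Fin N → ℂ) {f : MvPolynomial (Fin N) ℂ} {d : ℕ} (hf : f.IsHomogeneous d) :
    line z f = Polynomial.C (eval z f) * Polynomial.X ^ d := by
  unfold line
  rw [aeval_def, eval₂_eq, eval_eq, map_sum, Finset.sum_mul]
  apply Finset.sum_congr rfl
  intro m hm
  have := hf.degree_eq_sum_deg_support hm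
  rw [this, Polynomial.algebraMap_eq]
  simp only [mul_pow, Finset.prod_mul_distrib, map_mul, map_prod, map_pow]
  rw [Finset.prod_pow_eq_pow_sum]
  ring

lemma exists_linear {a : Fin N → MvPolynomial (Fin N) ℂ} {d : Fin N → ℕ} (ha : ∀ i, (a i).IsHomogeneous (d i))
    (hd : ∀ i, 0 < d i) (hV : V0 a) (i : Fin N) :
    ∃ l : MvPolynomial (Fin N) ℂ, l.IsHomogeneous 1 ∧ V0 (Function.update a i l) := by
  set s : Set (MvPolynomial (Fin N) ℂ) := a '' {i}ᶜ with hs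
  have hins : insert (a i) s = Set.range a := by
    rw [hs, ← Set.image_insert_eq, ← Set.image_univ]
    congr 1
    ext x; simp [em]
  let m : Ideal (MvPolynomial (Fin N) ℂ) := RingHom.ker (eval (0 : Fin N → ℂ))
  have hmp : m.IsPrime := RingHom.ker_isPrime _
  have hmin : m ∈ (Ideal.span (insert (a i) s)).minimalPrimes := by
    rw [hins]
    refine ⟨⟨hmp, ?_⟩, ?_⟩
    · rw [Ideal.span_le]
      rintro _ ⟨j, rfl⟩
      exact eval_zero_of_homog (ha j) (hd j)
    · rintro p ⟨hp, hle⟩ _ h hh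
      exact (hp.radical_le_iff.2 hle) (null hV hh)
  have hkey : ∀ z : Fin N → ℂ, z ≠ 0 → (∀ j, j ≠ i → eval z (a j) = 0) →
      RingHom.ker (line z) ∈ (Ideal.span s).minimalPrimes := by
    intro z hz hzj
    have hpr : (RingHom.ker (line z)).IsPrime := RingHom.ker_isPrime _
    refine Ideal.mem_minimalPrimes_span_of_mem_minimalPrimes_span_insert (p := m) ?_ (a i) s
      hmin s ?_ ?_
    · refine lt_of_le_of_ne ?_ ?_
      · intro h hh
        have h1 : line z h = 0 := hh
        have h2 : eval 0 h = Polynomial.eval 0 (line z h) := by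
          have : (Polynomial.aeval (0 : ℂ)).comp (line z) = aeval (0 : Fin N → ℂ) := by
            apply MvPolynomial.algHom_ext
            intro j
            simp [line]
          have := congrArg (fun φ => φ h) this
          simpa [Polynomial.coe_aeval_eq_eval, aeval_eq_eval] using this.symm
        change eval 0 h = 0
        rw [h2, h1]; simp
      · intro heq
        apply hz
        ext j
        have : (X j : MvPolynomial (Fin N) ℂ) ∈ m := by change eval 0 (X j) = 0; simp
        rw [← heq] at this
        have h3 : line z (X j) = 0 := this
        simpa [line] using h3
    · rintro _ ⟨j, hj, rfl⟩
      change line z (a j) = 0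
      rw [line_homog z (ha j), hzj j hj]; simp
    · intro x hx
      exact Ideal.le_radical (Ideal.subset_span (Set.mem_insert_of_mem _ hx))
  have hfin : (Ideal.span s).minimalPrimes.Finite :=
    Ideal.finite_minimalPrimes_of_isNoetherianRing _ _
  let P : Set (Ideal (MvPolynomial (Fin N) ℂ)) := {p ∈ (Ideal.span s).minimalPrimes | ∃ j, X j ∉ p}
  have hPfin : P.Finite := hfin.subset (Set.sep_subset _ _)
  have : Finite P := hPfin
  let Λ : (Fin N → ℂ) →ₗ[ℂ] (MvPolynomial (Fin N) ℂ) := Fintype.linearCombination ℂ (X : Fin N → MvPolynomial (Fin N) ℂ)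
  let W : P → Submodule ℂ (Fin N → ℂ) := fun p => (p.1.restrictScalars ℂ).comap Λ
  obtain ⟨c, hc⟩ : ∃ c, ∀ p : P, c ∉ W p := by
    by_contra! hcon
    obtain ⟨p, hp⟩ := Subspace.exists_eq_top_of_iUnion_eq_univ (p := W) (by
      ext c; simpa using hcon c)
    obtain ⟨j, hj⟩ := p.2.2
    apply hj
    have : Pi.single j 1 ∈ W p := by rw [hp]; trivial
    have h2 : Λ (Pi.single j 1) ∈ p.1 := this
    simpa [Λ, Fintype.linearCombination_apply, Pi.single_apply] using h2
  have hhom : (Λ c).IsHomogeneous 1 := by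
    rw [Fintype.linearCombination_apply]
    apply IsHomogeneous.sum
    intro j _
    rw [smul_eq_C_mul]
    exact isHomogeneous_C_mul_X _ _
  refine ⟨Λ c, hhom, ?_⟩
  intro z hz
  by_contra hz0
  have hq := hkey z hz0 (fun j hj => by
    have := hz j
    rwa [Function.update_of_ne hj] at this)
  have hi := hz i
  rw [Function.update_self] at hi
  obtain ⟨j, hj⟩ : ∃ j, z j ≠ 0 := by
    by_contra! h; exact hz0 (funext h)
  refine hc ⟨_, hq, j, ?_⟩ ?_
  · intro hX
    have h3 : line z (X j) = 0 := hX
    apply hj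
    simpa [line] using h3
  · change line z (Λ c) = 0
    rw [line_homog z hhom, hi]; simp

lemma NZ.pow {f : MvPolynomial (Fin N) ℂ} {J : Ideal (MvPolynomial (Fin N) ℂ)} (h : NZ f J) (m : ℕ) : NZ (f ^ m) J := by
  induction m with
  | zero => intro v hv; simpa using hv
  | succ m ih =>
    intro v hv
    apply h
    apply ih
    rw [← mul_assoc, ← pow_succ]; exact hv

lemma span_range_eq (a : Fin N → MvPolynomial (Fin N) ℂ) (i : Fin N) (f : MvPolynomial (Fin N) ℂ) :
    Ideal.span (Set.range (Function.update a i f)) =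
      Ideal.span {f} ⊔ Ideal.span (a '' {i}ᶜ) := by
  have : Set.range (Function.update a i f) = Function.update a i f '' (insert i {i}ᶜ) := by
    rw [← Set.image_univ]
    congr 1
    ext x; simp [em]
  rw [this, span_insert_image, Function.update_self, update_image_notMem _ _ (by simp)]

theorem main {a : Fin N → MvPolynomial (Fin N) ℂ} {d : Fin N → ℕ} (ha : ∀ i, (a i).IsHomogeneous (d i))
    (hd : ∀ i, 0 < d i) (hV : V0 a) : SR a ∧ PB a d := by
  induction hn : {i | d i ≠ 1}.ncard generalizing a d with
  | zero =>
    rw [Set.ncard_eq_zero] at hn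
    have h1 : d = fun _ => 1 := by
      ext i
      by_contra h
      have : i ∈ {i | d i ≠ 1} := h
      rw [hn] at this
      exact this
    subst h1
    exact base ha hV
  | succ n ih =>
    obtain ⟨i, hi⟩ : {i | d i ≠ 1}.Nonempty := by
      rw [Set.nonempty_iff_ne_empty]; intro h; rw [h] at hn; simp at hn
    obtain ⟨l, hl, hVl⟩ := exists_linear ha hd hV i
    have hb : ∀ j, (Function.update a i l j).IsHomogeneous (Function.update d i 1 j) := by
      intro j
      by_cases h : j = i
      · subst h; simpa using hl
      · simpa [Function.update_of_ne h] using ha j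
    have hd' : ∀ j, 0 < Function.update d i 1 j := by
      intro j
      by_cases h : j = i
      · subst h; simp
      · simpa [Function.update_of_ne h] using hd j
    obtain ⟨hSR, hPB⟩ := ih hb hd' hVl (by
      have : {j | Function.update d i 1 j ≠ 1} = {j | d j ≠ 1} \ {i} := by
        ext j
        by_cases h : j = i
        · subst h; simp
        · simp [h]
      rw [this, Set.ncard_sdiff_singleton_of_mem hi, hn]; rfl)
    set J : Ideal (MvPolynomial (Fin N) ℂ) := Ideal.span (a '' {i}ᶜ) with hJ
    have hHI : HI J := HI_span _ (by rintro _ ⟨j, _, rfl⟩; exact ⟨_, ha j⟩)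
    have hlJ : NZ l J := by
      have := hSR {i}ᶜ i (by simp)
      rwa [update_image_notMem _ _ (by simp), Function.update_self] at this
    have hspan : Ideal.span (Set.range a) = Ideal.span {a i} ⊔ J := by
      have := span_range_eq a i (a i)
      rwa [Function.update_eq_self] at this
    obtain ⟨m, hm⟩ : ∃ m, l ^ m ∈ Ideal.span {a i} ⊔ J := by
      rw [← hspan]
      exact null hV (eval_zero_of_homog hl one_pos)
    have hlm : (l ^ m).IsHomogeneous m := by simpa using hl.pow m
    obtain ⟨u, hu, hudeg⟩ := hdiv hHI (ha i) hlm hm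
    have hfu : NZ (a i * u) J := by
      intro v hv
      apply hlJ.pow m
      have : l ^ m * v = (l ^ m - a i * u) * v + a i * u * v := by ring
      rw [this]
      exact J.add_mem (J.mul_mem_right _ hu) hv
    have hf : NZ (a i) J := by
      intro v hv
      apply hfu
      have : a i * u * v = u * (a i * v) := by ring
      rw [this]; exact J.mul_mem_left _ hv
    have huJ : NZ u J := by
      intro v hv
      apply hfu
      rw [mul_assoc]; exact J.mul_mem_left _ hv
    constructor
    · have := exchange hb hd' hSR i (ha i) (by rwa [update_image_notMem _ _ (by simp)])
      simpa using this
    · -- the degree bound for powers of `l`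
      have hsum : ∑ j, d j = d i + ∑ j ∈ Finset.univ.erase i, d j :=
        (Finset.add_sum_erase _ _ (Finset.mem_univ i)).symm
      have hsum' : ∑ j, Function.update d i 1 j = 1 + ∑ j ∈ Finset.univ.erase i, d j := by
        rw [← Finset.add_sum_erase _ _ (Finset.mem_univ i), Function.update_self]
        congr 1
        apply Finset.sum_congr rfl
        intro j hj
        rw [Function.update_of_ne (Finset.ne_of_mem_erase hj)]
      set D := ∑ j ∈ Finset.univ.erase i, d j with hD
      have hpow : ∀ r e, r + D < e + N → ∀ h : MvPolynomial (Fin N) ℂ, h.IsHomogeneous e →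
          ∃ k, h - l ^ r * k ∈ J := by
        intro r
        induction r with
        | zero => intro e _ h _; exact ⟨h, by simp⟩
        | succ r ihr =>
          intro e he h hh
          have h1 := hPB e (by omega) h hh
          rw [span_range_eq] at h1
          obtain ⟨k, hk, hk'⟩ := hdiv hHI hl hh h1
          rcases hk' with rfl | ⟨e', he', hke⟩
          · exact ⟨0, by simpa using hk⟩
          · obtain ⟨k2, hk2⟩ := ihr e' (by omega) k hke
            refine ⟨k2, ?_⟩
            have : h - l ^ (r + 1) * k2 = (h - l * k) + l * (k - l ^ r * k2) := by ring
            rw [this]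
            exact J.add_mem hk (J.mul_mem_left _ hk2)
      intro e he h hh
      rw [hspan]
      rcases hudeg with rfl | ⟨e', he', hue⟩
      · exact Ideal.mem_sup_right (huJ _ (by simp))
      · obtain ⟨k, hk⟩ := hpow m (e' + e) (by omega) (u * h) (hue.mul hh)
        have h2 : h - a i * k ∈ J := by
          apply huJ
          have : u * (h - a i * k) = (u * h - l ^ m * k) + (l ^ m - a i * u) * k := by ring
          rw [this]
          exact J.add_mem hk (J.mul_mem_right _ hu)
        have : h = k * a i + (h - a i * k) := by ring
        rw [this]
        exact Ideal.add_mem _ (Ideal.mem_sup_left (Ideal.mul_mem_left _ _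
          (Ideal.mem_span_singleton_self _))) (Ideal.mem_sup_right h2)

lemma degree_cons (n k : ℕ) (s : Fin n →₀ ℕ) :
    (Finsupp.cons k s).degree = k + s.sum fun _ e => e := by
  rw [Finsupp.degree_eq_sum, Fin.sum_univ_succ, Finsupp.sum_fintype _ _ (by simp)]
  simp

lemma homogenize_isHomogeneous (n d : ℕ) (F : MvPolynomial (Fin n) ℂ) (h : F.totalDegree ≤ d) :
    (homogenize n d F).IsHomogeneous d := by
  unfold homogenize
  apply IsHomogeneous.sum
  intro s hs
  apply isHomogeneous_monomial
  rw [degree_cons]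
  have := le_totalDegree hs
  omega

/-- Dehomogenization: set the first variable equal to one. -/
noncomputable def dehom (n : ℕ) : MvPolynomial (Fin (n + 1)) ℂ →ₐ[ℂ] MvPolynomial (Fin n) ℂ :=
  aeval (Fin.cons 1 X)

lemma dehom_monomial (n : ℕ) (m : Fin (n + 1) →₀ ℕ) (c : ℂ) :
    dehom n (monomial m c) = monomial m.tail c := by
  unfold dehom
  rw [aeval_monomial, Finsupp.prod_fintype _ _ (by simp), Fin.prod_univ_succ, monomial_eq,
    Finsupp.prod_fintype _ _ (by simp)]
  simp [algebraMap_eq, Finsupp.tail_apply]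

lemma dehom_homogenize (n d : ℕ) (F : MvPolynomial (Fin n) ℂ) :
    dehom n (homogenize n d F) = F := by
  unfold homogenize
  rw [map_sum]
  simp only [dehom_monomial, Finsupp.tail_cons]
  exact F.support_sum_monomial_coeff

lemma dehom_degree (n : ℕ) (p : MvPolynomial (Fin (n + 1)) ℂ) (e : ℕ) (h : p.totalDegree ≤ e) :
    (dehom n p).totalDegree ≤ e := by
  rw [← p.support_sum_monomial_coeff, map_sum]
  apply totalDegree_finsetSum_le
  intro m hm
  rw [dehom_monomial]
  refine (totalDegree_monomial_le _ _).trans ?_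
  refine le_trans ?_ ((le_totalDegree hm).trans h)
  rw [Finsupp.sum_fintype _ _ (by simp), Finsupp.sum_fintype _ _ (by simp), Fin.sum_univ_succ]
  simp [Finsupp.tail_apply]

end Mac

/-- Macaulay's theorem: if `F_1,…,F_{n+1}` have degrees `d_1,…,d_{n+1}` and their
homogenizations have no common zero in `ℙ^n` (only the trivial common zero in `ℂ^{n+1}`),
then the Bézout equation `Σ F_j Q_j = 1` has a solution with
`deg (F_j Q_j) ≤ d_1 + ⋯ + d_{n+1} − n`. -/
theorem macaulay (n : ℕ) (F : Fin (n + 1) → MvPolynomial (Fin n) ℂ) (d : Fin (n + 1) → ℕ)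
    (hdeg : ∀ j, (F j).totalDegree = d j)
    (hnozero : ∀ z : Fin (n + 1) → ℂ,
      (∀ j, eval z (homogenize n (d j) (F j)) = 0) → z = 0) :
    ∃ Q : Fin (n + 1) → MvPolynomial (Fin n) ℂ,
      (∑ j, F j * Q j = 1) ∧
      ∀ j, (F j * Q j).totalDegree ≤ (∑ j, d j) - n := by
  classical
  by_cases hc : ∃ j, d j = 0 ∧ F j ≠ 0
  · obtain ⟨j, hj, hF⟩ := hc
    have hFC : F j = C (coeff 0 (F j)) := by
      apply totalDegree_eq_zero_iff_eq_C.1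
      rw [hdeg, hj]
    have hne : coeff 0 (F j) ≠ 0 := by
      intro h
      rw [h, C_0] at hFC
      exact hF hFC
    have hmul : F j * C (coeff 0 (F j))⁻¹ = 1 := by
      rw [hFC, coeff_C, if_pos rfl, ← C_mul, mul_inv_cancel₀ hne, C_1]
    refine ⟨fun k => if k = j then C (coeff 0 (F j))⁻¹ else 0, ?_, ?_⟩
    · simp [hmul]
    · intro k
      by_cases hk : k = j
      · subst hk; simp [hmul]
      · simp [hk]
  · push Not at hc
    set a : Fin (n + 1) → MvPolynomial (Fin (n + 1)) ℂ :=
      fun j => homogenize n (d j) (F j) with ha_def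
    have hhom : ∀ j, (a j).IsHomogeneous (d j) := fun j =>
      Mac.homogenize_isHomogeneous n (d j) (F j) (hdeg j).le
    have hhom' : ∀ j, (a j).IsHomogeneous (max (d j) 1) := by
      intro j
      by_cases h : d j = 0
      · have : a j = 0 := by simp [ha_def, homogenize, hc j h]
        rw [this]; exact isHomogeneous_zero _ _ _
      · rw [max_eq_left (by omega)]; exact hhom j
    obtain ⟨hSR, hPB⟩ := Mac.main hhom' (fun j => by simp) hnozero
    have hane : ∀ j, a j ≠ 0 := by
      intro j hj
      have := hSR ∅ j (by simp) 1 (by simp [hj])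
      simp at this
    have hpos : ∀ j, 0 < d j := by
      intro j
      by_contra h
      apply hane j
      simp [ha_def, homogenize, hc j (by omega)]
    have hsum : ∑ j, max (d j) 1 = ∑ j, d j :=
      Finset.sum_congr rfl fun j _ => max_eq_left (hpos j)
    have hmem := hPB (∑ j, d j - n) (by rw [hsum]; omega) (X 0 ^ (∑ j, d j - n))
      (isHomogeneous_X_pow _ _)
    obtain ⟨q, hq⟩ := Ideal.mem_span_range_iff_exists_fun.1 hmem
    set e := ∑ j, d j - n with he
    have hle : ∀ j, ∃ k, d j + k = e := by
      intro j
      have h1 : n ≤ ∑ k ∈ Finset.univ.erase j, d k := by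
        calc n = ∑ k ∈ Finset.univ.erase j, 1 := by simp
          _ ≤ _ := Finset.sum_le_sum fun k _ => hpos k
      have h2 := Finset.add_sum_erase Finset.univ d (Finset.mem_univ j)
      exact ⟨e - d j, by omega⟩
    choose k hk using hle
    have hcomp : ∑ j, a j * homogeneousComponent (k j) (q j) = X 0 ^ e := by
      rw [← homogeneousComponent_eq_self (isHomogeneous_X_pow (R := ℂ) (0 : Fin (n + 1)) e),
        ← hq, map_sum]
      apply Finset.sum_congr rfl
      intro j _
      rw [← Mac.comp_mul (hhom j), hk j, mul_comm]
    refine ⟨fun j => Mac.dehom n (homogeneousComponent (k j) (q j)), ?_, ?_⟩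
    · have := congrArg (Mac.dehom n) hcomp
      have hX0 : Mac.dehom n (X 0) = 1 := by simp [Mac.dehom]
      rw [map_sum, map_pow, hX0, one_pow] at this
      simpa only [map_mul, ha_def, Mac.dehom_homogenize] using this
    · intro j
      have h1 : F j * Mac.dehom n (homogeneousComponent (k j) (q j)) =
          Mac.dehom n (a j * homogeneousComponent (k j) (q j)) := by
        rw [map_mul, Mac.dehom_homogenize]
      rw [h1]
      refine Mac.dehom_degree n _ e ?_
      have := (hhom j).mul (homogeneousComponent_isHomogeneous (k j) (q j))
      rw [hk j] at this
      exact this.totalDegree_le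
end

section
/- Let f = (f_1,…,f_m) be homogeneous polynomials defining a section of L^{d_1} ⊕ ⋯ ⊕ L^{d_m} on ℙ^n with m ≤ n, and suppose the common zero set Z of f in ℙ^n has codimension m. If a homogeneous polynomial φ of degree r lies, at every point of the affine chart ℂ^n, in the ideal generated locally by f_1,…,f_m in the ring of germs of holomorphic functions, and Z ∩ {z_0 = 0} has codimension m+1 in ℙ^n, then φ lies in the local ideal generated by f_1,…,f_m at every point of ℙ^n, including points of {z_0=0}. -/
open MvPolynomial Filter

section CM
open IsLocalRing RingTheory.Sequence CategoryTheory Abelian Limits Pointwise Module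

lemma aux_ischebeck {A : Type} [CommRing A] [IsNoetherianRing A] [IsLocalRing A]
    (ys : List A) : ∀ (M : Type) [AddCommGroup M] [Module A M] [Module.Finite A M]
    (_ : ∀ y ∈ ys, y ∈ maximalIdeal A) (_ : IsRegular M ys) (p : Ideal A)
    (_ : p ∈ associatedPrimes A M), (ys.length : WithBot ℕ∞) ≤ ringKrullDim (A ⧸ p) := by
  induction ys with
  | nil =>
    intro M _ _ _ _ _ p hp
    have := hp.1
    simpa using ringKrullDim_nonneg_of_nontrivial (R := A ⧸ p)
  | cons y ys ih =>
    intro M _ _ _ hmem hreg p hp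
    rw [isRegular_cons_iff] at hreg
    have hpp : p.IsPrime := hp.1
    obtain ⟨x0, hx0⟩ := ((isAssociatedPrime_iff (R := A) (M := M)).1 hp).2
    have hyp : y ∉ p := by
      intro hy
      have h1 : y • x0 = 0 := by
        rw [hx0] at hy
        simpa [Submodule.mem_colon_singleton] using hy
      have h2 : x0 = 0 := hreg.1 (by simpa using h1)
      apply hpp.ne_top
      rw [hx0, h2]
      ext a
      simp [Submodule.mem_colon_singleton]
    -- the p-torsion
    let N : Submodule A M := Submodule.torsionBySet A M p
    have hN : ∃ x ∈ N, x ∉ (y • ⊤ : Submodule A M) := by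
      by_contra hcon
      push Not at hcon
      have hle : N ≤ maximalIdeal A • N := by
        intro x hx
        obtain ⟨x', -, hx'⟩ := (Submodule.mem_smul_pointwise_iff_exists _ _ _).1 (hcon x hx)
        rw [← hx']
        refine Submodule.smul_mem_smul (hmem y (by simp)) ?_
        rw [Submodule.mem_torsionBySet_iff] at hx ⊢
        intro a
        apply hreg.1
        have := hx a
        rw [← hx', smul_comm] at this
        simpa using this
      have hN0 : N = ⊥ := Submodule.eq_bot_of_le_smul_of_le_jacobson_bot _ N
        (IsNoetherian.noetherian N) hle (maximalIdeal_le_jacobson _)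
      have hx0N : x0 ∈ N := by
        rw [Submodule.mem_torsionBySet_iff]
        rintro ⟨a, ha⟩
        have ha' : a ∈ p := ha
        rw [hx0] at ha'
        simpa [Submodule.mem_colon_singleton] using ha'
      rw [hN0] at hx0N
      have h2 : x0 = 0 := by simpa using hx0N
      apply hpp.ne_top
      rw [hx0, h2]
      ext a
      simp [Submodule.mem_colon_singleton]
    obtain ⟨x, hxN, hxy⟩ := hN
    have hxne : (Submodule.Quotient.mk x : QuotSMulTop y M) ≠ 0 := by
      intro h
      exact hxy ((Submodule.Quotient.mk_eq_zero _).1 h)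
    obtain ⟨q, hq, hle⟩ := exists_le_isAssociatedPrime_of_isNoetherianRing A
      (Submodule.Quotient.mk x : QuotSMulTop y M) hxne
    have hqp : q.IsPrime := hq.1
    have hpq : p ≤ q := by
      intro a ha
      apply hle
      rw [Submodule.mem_colon_singleton, ← Submodule.Quotient.mk_smul]
      rw [(Submodule.mem_torsionBySet_iff _ _).1 hxN ⟨a, ha⟩]
      simp
    have hyq : y ∈ q := by
      apply hle
      rw [Submodule.mem_colon_singleton, ← Submodule.Quotient.mk_smul, Submodule.mem_bot,
        Submodule.Quotient.mk_eq_zero]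
      exact Submodule.smul_mem_pointwise_smul _ _ _ trivial
    have h1 := ih (QuotSMulTop y M) (fun z hz => hmem z (by simp [hz])) hreg.2 q hq
    have h2 : ringKrullDim (A ⧸ q) + 1 ≤ ringKrullDim (A ⧸ p) := by
      refine ringKrullDim_succ_le_of_surjective (Ideal.Quotient.factor hpq)
        (Ideal.Quotient.factor_surjective hpq) (r := Ideal.Quotient.mk p y) ?_ ?_
      · rw [mem_nonZeroDivisors_iff_ne_zero]
        rwa [Ne, Ideal.Quotient.eq_zero_iff_mem]
      · simpa [Ideal.Quotient.eq_zero_iff_mem] using hyq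
    refine le_trans ?_ h2
    push_cast [List.length_cons]
    gcongr

lemma aux_dim_le {A : Type} [CommRing A] [IsNoetherianRing A] [IsLocalRing A]
    (as : List A) : ∀ (M : Type) [AddCommGroup M] [Module A M] [Module.Finite A M]
    (_ : ∀ y ∈ as, y ∈ maximalIdeal A),
    supportDim A M ≤ supportDim A (M ⧸ (Ideal.ofList as • ⊤ : Submodule A M)) + as.length := by
  induction as with
  | nil =>
    intro M _ _ _ _
    have e : (M ⧸ (Ideal.ofList ([] : List A) • ⊤ : Submodule A M)) ≃ₗ[A] M :=
      Submodule.quotEquivOfEqBot _ (by rw [Ideal.ofList_nil, Submodule.bot_smul])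
    rw [supportDim_eq_of_equiv e]
    simp
  | cons a as ih =>
    intro M _ _ _ hm
    rw [supportDim_eq_of_equiv (Submodule.quotOfListConsSMulTopEquivQuotSMulTopInner M a as)]
    have h1 := ih (QuotSMulTop a M) (fun z hz => hm z (by simp [hz]))
    have h2 := supportDim_le_supportDim_quotSMulTop_succ (M := M) (hm a (by simp))
    refine h2.trans ?_
    push_cast [List.length_cons]
    rw [← add_assoc]
    gcongr

lemma aux_CM {A : Type} [CommRing A] [IsNoetherianRing A] [IsLocalRing A]
    (as : List A) : ∀ (M : Type) [AddCommGroup M] [Module A M] [Module.Finite A M] [Nontrivial M]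
    (_ : ∀ y ∈ as, y ∈ maximalIdeal A) (d : ℕ)
    (_ : ∃ ys : List A, ys.length = d + as.length ∧ (∀ y ∈ ys, y ∈ maximalIdeal A) ∧
      IsRegular M ys)
    (_ : supportDim A (M ⧸ (Ideal.ofList as • ⊤ : Submodule A M)) ≤ d),
    IsWeaklyRegular M as := by
  induction as with
  | nil => intros; exact IsWeaklyRegular.nil _ _
  | cons a as ih =>
    intro M _ _ _ _ hm d hys hdim
    have ham : a ∈ maximalIdeal A := hm a (by simp)
    rw [supportDim_eq_of_equiv (Submodule.quotOfListConsSMulTopEquivQuotSMulTopInner M a as)]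
      at hdim
    have hm' : ∀ y ∈ as, y ∈ maximalIdeal A := fun z hz => hm z (by simp [hz])
    have hdimM := aux_dim_le as (QuotSMulTop a M) hm'
    have hreg : IsSMulRegular M a := by
      by_contra hna
      have hmem : a ∈ ⋃ p ∈ associatedPrimes A M, (p : Set A) := by
        rw [biUnion_associatedPrimes_eq_compl_regular]
        exact hna
      simp only [Set.mem_iUnion] at hmem
      obtain ⟨p, hp, hap⟩ := hmem
      have hpp : p.IsPrime := hp.1
      obtain ⟨ys, hlen, hysm, hysr⟩ := hys
      have h1 := aux_ischebeck ys M hysm hysr p hp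
      have h2 : ringKrullDim (A ⧸ p) ≤ supportDim A (QuotSMulTop a M) := by
        rw [ringKrullDim_quotient, Module.supportDim]
        refine Order.krullDim_le_of_strictMono
          (fun q => ⟨q.1, ?_⟩) (fun q q' h => h)
        have : q.1 ∈ Module.support A (QuotSMulTop a M) := by
          rw [Module.support_quotSMulTop]
          refine ⟨?_, ?_⟩
          · rw [Module.support_eq_zeroLocus]
            refine Set.Subset.trans ?_ q.2
            have := IsAssociatedPrime.annihilator_le hp
            rwa [Submodule.annihilator_top] at this
          · simpa using q.2 hap
        exact this
      have h3 : ((d + (as.length + 1) : ℕ) : WithBot ℕ∞) ≤ ((d + as.length : ℕ) : WithBot ℕ∞) := by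
        rw [hlen, List.length_cons] at h1
        refine (h1.trans (h2.trans (hdimM.trans ?_)))
        push_cast
        gcongr
      have h4 : d + (as.length + 1) ≤ d + as.length := by exact_mod_cast h3
      omega
    have : Nontrivial (QuotSMulTop a M) := nontrivial_quotSMulTop_of_mem_maximalIdeal M ham
    rw [isWeaklyRegular_cons_iff]
    refine ⟨hreg, ih (QuotSMulTop a M) hm' d ?_ hdim⟩
    have hlt : ∀ (M : Type) [AddCommGroup M] [Module A M] [Module.Finite A M] [Nontrivial M],
        maximalIdeal A • (⊤ : Submodule A M) < ⊤ := by
      intro M _ _ _ _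
      rw [lt_top_iff_ne_top]
      exact (Submodule.top_ne_ideal_smul_of_le_jacobson_annihilator
        (maximalIdeal_le_jacobson _)).symm
    have t1 := ModuleCat.exists_isRegular_tfae (maximalIdeal A) (d + (as.length + 1))
      (ModuleCat.of A M) (hlt M)
    have t2 := ModuleCat.exists_isRegular_tfae (maximalIdeal A) (d + as.length)
      (ModuleCat.of A (QuotSMulTop a M)) (hlt _)
    have e1 := (t1.out 3 1).1 hys
    refine (t2.out 1 3).1 ?_
    intro i hi
    have zero1 := AddCommGrpCat.isZero_of_iff_subsingleton.mpr (e1 i (by omega))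
    have zero2 := AddCommGrpCat.isZero_of_iff_subsingleton.mpr (e1 (i + 1) (by omega))
    exact AddCommGrpCat.subsingleton_of_isZero <| ShortComplex.Exact.isZero_of_both_zeros
      ((Ext.covariant_sequence_exact₃' _
        (IsSMulRegular.smulShortComplex_shortExact (M := ModuleCat.of A M) hreg)) i (i + 1) rfl)
      (zero1.eq_zero_of_src _) (zero2.eq_zero_of_tgt _)

end CM

section An
open Asymptotics Topology

lemma aux_univ (q : Polynomial ℂ) (k : ℕ)
    (h : (fun t : ℂ => q.eval t) =O[𝓝 0] fun t => ‖t‖ ^ k) : ∀ i < k, q.coeff i = 0 := by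
  by_cases hq : q = 0
  · simp [hq]
  obtain ⟨u, hu, hnd⟩ := Polynomial.exists_eq_pow_rootMultiplicity_mul_and_not_dvd q hq 0
  set j := q.rootMultiplicity 0
  simp only [Polynomial.C_0, sub_zero] at hu hnd
  by_cases hjk : k ≤ j
  · intro i hi
    rw [hu, Polynomial.coeff_X_pow_mul']
    simp; omega
  exfalso
  push Not at hjk
  apply hnd
  rw [Polynomial.X_dvd_iff, Polynomial.coeff_zero_eq_eval_zero]
  obtain ⟨c, hc⟩ := h.bound
  have hlim : Tendsto (fun t : ℂ => u.eval t) (𝓝[≠] 0) (𝓝 (u.eval 0)) :=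
    (u.continuous.tendsto 0).mono_left nhdsWithin_le_nhds
  have hz : Tendsto (fun t : ℂ => u.eval t) (𝓝[≠] 0) (𝓝 0) := by
    have hb : ∀ᶠ t : ℂ in 𝓝[≠] 0, ‖u.eval t‖ ≤ c * ‖t‖ ^ (k - j) := by
      filter_upwards [hc.filter_mono nhdsWithin_le_nhds, self_mem_nhdsWithin] with t ht ht0
      have ht0' : 0 < ‖t‖ := norm_pos_iff.2 ht0
      rw [hu] at ht
      simp only [Polynomial.eval_mul, Polynomial.eval_pow, Polynomial.eval_X, norm_mul, norm_pow,
        norm_norm] at ht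
      have e : ‖t‖ ^ k = ‖t‖ ^ j * ‖t‖ ^ (k - j) := by rw [← pow_add]; congr 1; omega
      rw [e] at ht
      have hp : 0 < ‖t‖ ^ j := by positivity
      have : ‖t‖ ^ j * ‖u.eval t‖ ≤ ‖t‖ ^ j * (c * ‖t‖ ^ (k - j)) := by linarith
      exact le_of_mul_le_mul_left this hp
    refine squeeze_zero_norm' hb ?_
    have : Tendsto (fun t : ℂ => c * ‖t‖ ^ (k - j)) (𝓝 0) (𝓝 (c * ‖(0:ℂ)‖ ^ (k - j))) :=
      (Continuous.tendsto (by fun_prop) 0)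
    have e0 : c * ‖(0:ℂ)‖ ^ (k - j) = 0 := by simp; right; omega
    rw [e0] at this
    exact this.mono_left nhdsWithin_le_nhds
  exact tendsto_nhds_unique hlim hz

lemma aux_eval_smul {N l : ℕ} {P : MvPolynomial (Fin N) ℂ} (hP : P.IsHomogeneous l) (t : ℂ)
    (v : Fin N → ℂ) : eval (t • v) P = t ^ l * eval v P := by
  rw [eval_eq', eval_eq', Finset.mul_sum]
  refine Finset.sum_congr rfl fun m hm => ?_
  have hd : ∑ i, m i = l := by
    rw [← Finsupp.degree_eq_sum]
    have := hP (mem_support_iff.1 hm)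
    rw [Finsupp.degree_eq_weight_one]; exact this
  simp only [Pi.smul_apply, smul_eq_mul, mul_pow, Finset.prod_mul_distrib,
    Finset.prod_pow_eq_pow_sum, hd]
  ring

lemma aux_eval_aeval {N : ℕ} (F : Fin N → MvPolynomial (Fin N) ℂ) (y : Fin N → ℂ)
    (g : MvPolynomial (Fin N) ℂ) : eval y (aeval F g) = eval (fun i => eval y (F i)) g := by
  induction g using MvPolynomial.induction_on with
  | C a => simp
  | add p q hp hq => rw [map_add, map_add, map_add, hp, hq]
  | mul_X p i hp => rw [map_mul, map_mul, map_mul, hp, aeval_X, eval_X]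

lemma aux_hom_zero {N : ℕ} (g : MvPolynomial (Fin N) ℂ) (k : ℕ)
    (h : (fun y : Fin N → ℂ => eval y g) =O[𝓝 0] fun y => ‖y‖ ^ k) :
    ∀ i < k, homogeneousComponent i g = 0 := by
  intro i hi
  apply MvPolynomial.funext
  intro v
  let q : Polynomial ℂ := ∑ l ∈ Finset.range (g.totalDegree + 1),
    Polynomial.C (eval v (homogeneousComponent l g)) * Polynomial.X ^ l
  have hq : ∀ t : ℂ, q.eval t = eval (t • v) g := by
    intro t
    conv_rhs => rw [← sum_homogeneousComponent g]
    rw [map_sum, Polynomial.eval_finsetSum]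
    refine Finset.sum_congr rfl fun l _ => ?_
    rw [aux_eval_smul (homogeneousComponent_isHomogeneous l g) t v]
    rw [Polynomial.eval_mul, Polynomial.eval_C, Polynomial.eval_pow, Polynomial.eval_X, mul_comm]
  have hO : (fun t : ℂ => q.eval t) =O[𝓝 0] fun t => ‖t‖ ^ k := by
    simp_rw [hq]
    have ht : Tendsto (fun t : ℂ => t • v) (𝓝 0) (𝓝 0) := by
      have : Tendsto (fun t : ℂ => t • v) (𝓝 0) (𝓝 ((0:ℂ) • v)) :=
        Continuous.tendsto (by fun_prop) 0
      simpa using this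
    refine (h.comp_tendsto ht).trans ?_
    refine IsBigO.of_bound (‖v‖ ^ k) (Eventually.of_forall fun t => ?_)
    simp [norm_smul, mul_pow, mul_comm]
  have hc := aux_univ q k hO i hi
  simp only [q, Polynomial.finsetSum_coeff, Polynomial.coeff_C_mul, Polynomial.coeff_X_pow] at hc
  by_cases hi' : i ∈ Finset.range (g.totalDegree + 1)
  · simpa [Finset.sum_ite_eq, hi'] using hc
  · rw [homogeneousComponent_eq_zero]
    simpa using hi'

lemma aux_mem_pow {N : ℕ} (g : MvPolynomial (Fin N) ℂ) (k : ℕ) (x : Fin N → ℂ)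
    (h : (fun y : Fin N → ℂ => eval (x + y) g) =O[𝓝 0] fun y => ‖y‖ ^ k) :
    g ∈ (RingHom.ker (eval x : MvPolynomial (Fin N) ℂ →+* ℂ)) ^ k := by
  let g' : MvPolynomial (Fin N) ℂ := aeval (fun i => X i + C (x i)) g
  have hg' : ∀ y, eval y g' = eval (x + y) g := by
    intro y
    rw [aux_eval_aeval]
    congr 2
    ext i
    simp [add_comm]
  have hback : aeval (fun i => X i - C (x i)) g' = g := by
    apply MvPolynomial.funext
    intro z
    have : eval z (aeval (fun i => X i - C (x i)) g') = eval (z - x) g' := by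
      rw [aux_eval_aeval]
      congr 2
      ext i
      simp
    rw [this, hg']; simp
  have hz := aux_hom_zero g' k (by simpa only [hg'] using h)
  rw [← hback, aeval_def, eval₂_eq']
  refine Ideal.sum_mem _ fun m hm => Ideal.mul_mem_left _ _ ?_
  have hdeg : k ≤ m.degree := by
    by_contra hlt
    push Not at hlt
    have := hz _ hlt
    have hc : coeff m (homogeneousComponent m.degree g') = 0 := by rw [this]; simp
    rw [coeff_homogeneousComponent] at hc
    simp at hc
    exact (mem_support_iff.1 hm) hc
  refine Ideal.pow_le_pow_right hdeg ?_
  rw [Finsupp.degree_eq_sum, ← Finset.prod_pow_eq_pow_sum]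
  refine Ideal.prod_mem_prod fun i _ => Ideal.pow_mem_pow ?_ _
  simp [RingHom.mem_ker]

lemma aux_taylor {N : ℕ} (h : (Fin N → ℂ) → ℂ) (x : Fin N → ℂ) (hh : AnalyticAt ℂ h x) (k : ℕ) :
    ∃ T : MvPolynomial (Fin N) ℂ,
      (fun y : Fin N → ℂ => h (x + y) - eval (x + y) T) =O[𝓝 0] fun y => ‖y‖ ^ k := by
  obtain ⟨p, hp⟩ := hh
  refine ⟨∑ i ∈ Finset.range k, ∑ r : Fin i → Fin N,
    C (p i (fun l => Pi.single (r l) 1)) * ∏ l, (X (r l) - C (x (r l))), ?_⟩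
  refine (hp.isBigO_sub_partialSum_pow k).congr_left fun y => ?_
  congr 1
  symm
  rw [map_sum, FormalMultilinearSeries.partialSum]
  refine Finset.sum_congr rfl fun i _ => ?_
  have hy : y = ∑ j, y j • (Pi.single j (1:ℂ) : Fin N → ℂ) := by
    ext l
    simp [Finset.sum_apply, Pi.single_apply]
  conv_rhs => rw [hy]
  rw [(p i).map_sum, map_sum]
  refine Finset.sum_congr rfl fun r _ => ?_
  rw [ContinuousMultilinearMap.map_smul_univ]
  simp [mul_comm, map_prod]

lemma aux_local {N m : ℕ} (f : Fin m → MvPolynomial (Fin N) ℂ) (φ : MvPolynomial (Fin N) ℂ)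
    (x : Fin N → ℂ)
    (H : ∃ h : Fin m → ((Fin N → ℂ) → ℂ),
        (∀ j, AnalyticAt ℂ (h j) x) ∧
        ∀ᶠ z in nhds x, eval z φ = ∑ j, h j z * eval z (f j)) :
    ∃ s : MvPolynomial (Fin N) ℂ, eval x s ≠ 0 ∧ s * φ ∈ Ideal.span (Set.range f) := by
  obtain ⟨h, hh, heq⟩ := H
  set I := Ideal.span (Set.range f)
  set P := RingHom.ker (eval x : MvPolynomial (Fin N) ℂ →+* ℂ)
  have key : ∀ k, φ ∈ I ⊔ P ^ k := by
    intro k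
    choose T hT using fun j => aux_taylor (h j) x (hh j) k
    have hg : φ - ∑ j, T j * f j ∈ P ^ k := by
      apply aux_mem_pow
      have ht : Tendsto (fun y : Fin N → ℂ => x + y) (𝓝 0) (𝓝 x) := by
        have : Tendsto (fun y : Fin N → ℂ => x + y) (𝓝 0) (𝓝 (x + 0)) :=
          Continuous.tendsto (by fun_prop) 0
        simpa using this
      have h1 : (fun y : Fin N → ℂ => eval (x + y) (φ - ∑ j, T j * f j)) =ᶠ[𝓝 0]
          fun y => ∑ j, (h j (x + y) - eval (x + y) (T j)) * eval (x + y) (f j) := by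
        filter_upwards [ht.eventually heq] with y hy
        simp only [map_sub, map_sum, map_mul, hy, sub_mul, Finset.sum_sub_distrib]
      refine h1.trans_isBigO ?_
      refine IsBigO.fun_sum fun j _ => ?_
      have hb : (fun y : Fin N → ℂ => eval (x + y) (f j)) =O[𝓝 0] fun _ => (1 : ℝ) := by
        have hc : Continuous (fun y : Fin N → ℂ => eval (x + y) (f j)) :=
          (MvPolynomial.continuous_eval (f j)).comp (by fun_prop)
        exact (hc.tendsto 0).isBigO_one ℝ
      simpa using (hT j).mul hb
    have : φ = ∑ j, T j * f j + (φ - ∑ j, T j * f j) := by ring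
    rw [this]
    refine Submodule.add_mem_sup (Ideal.sum_mem _ fun j _ => Ideal.mul_mem_left _ _ ?_) hg
    exact Ideal.subset_span ⟨j, rfl⟩
  have hmem : (Ideal.Quotient.mk I φ) ∈
      (⨅ i : ℕ, P ^ i • ⊤ : Submodule (MvPolynomial (Fin N) ℂ) (MvPolynomial (Fin N) ℂ ⧸ I)) := by
    rw [Submodule.mem_iInf]
    intro k
    obtain ⟨a, ha, b, hb, hab⟩ := Submodule.mem_sup.1 (key k)
    have : Ideal.Quotient.mk I φ = b • (1 : MvPolynomial (Fin N) ℂ ⧸ I) := by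
      rw [← hab, map_add, Ideal.Quotient.eq_zero_iff_mem.2 ha, zero_add]
      change Ideal.Quotient.mk I b = Ideal.Quotient.mk I (b * 1)
      rw [mul_one]
    rw [this]
    exact Submodule.smul_mem_smul hb trivial
  obtain ⟨⟨r, hr⟩, hrx⟩ := (Ideal.mem_iInf_smul_pow_eq_bot_iff P _).1 hmem
  refine ⟨1 - r, ?_, ?_⟩
  · have : eval x r = 0 := hr
    simp [this]
  · rw [← Ideal.Quotient.eq_zero_iff_mem]
    have : Ideal.Quotient.mk I (r * φ) = Ideal.Quotient.mk I φ := hrx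
    rw [sub_mul, map_sub, this]; simp

end An

section Alg
open IsLocalRing RingTheory.Sequence

lemma aux_nss {N : ℕ} (I : Ideal (MvPolynomial (Fin (N + 1)) ℂ))
    (φ : MvPolynomial (Fin (N + 1)) ℂ)
    (H : ∀ x : Fin (N + 1) → ℂ, x 0 ≠ 0 → ∃ s, eval x s ≠ 0 ∧ s * φ ∈ I) :
    ∃ k : ℕ, X 0 ^ k * φ ∈ I := by
  let J : Ideal (MvPolynomial (Fin (N + 1)) ℂ) :=
    Submodule.comap (LinearMap.toSpanSingleton _ _ φ) I
  have hJ : ∀ s, s ∈ J ↔ s * φ ∈ I := fun s => Iff.rfl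
  have hX : (X 0 : MvPolynomial (Fin (N + 1)) ℂ) ∈ J.radical := by
    rw [← MvPolynomial.vanishingIdeal_zeroLocus_eq_radical (K := ℂ), mem_vanishingIdeal_iff]
    intro x hx
    by_contra hne
    obtain ⟨s, hs, hsφ⟩ := H x (by simpa using hne)
    apply hs
    have := hx s ((hJ s).2 hsφ)
    rwa [MvPolynomial.aeval_eq_eval] at this
  obtain ⟨k, hk⟩ := hX
  exact ⟨k, (hJ _).1 hk⟩

lemma aux_graded {N m r : ℕ} (d : Fin m → ℕ) (f : Fin m → MvPolynomial (Fin N) ℂ)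
    (hf : ∀ j, (f j).IsHomogeneous (d j))
    (φ : MvPolynomial (Fin N) ℂ) (hφ : φ.IsHomogeneous r)
    (s : MvPolynomial (Fin N) ℂ) (hs : eval 0 s ≠ 0)
    (h : s * φ ∈ Ideal.span (Set.range f)) : φ ∈ Ideal.span (Set.range f) := by
  letI : GradedAlgebra (homogeneousSubmodule (Fin N) ℂ) := MvPolynomial.gradedAlgebra
  have hI : (Ideal.span (Set.range f)).IsHomogeneous (homogeneousSubmodule (Fin N) ℂ) := by
    apply Ideal.homogeneous_span
    rintro _ ⟨j, rfl⟩
    exact ⟨d j, hf j⟩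
  have h1 := hI r h
  rw [DirectSum.coe_decompose_mul_of_right_mem_of_le (homogeneousSubmodule (Fin N) ℂ)
    (show φ ∈ homogeneousSubmodule (Fin N) ℂ r from hφ) le_rfl, Nat.sub_self] at h1
  have h2 : (DirectSum.decompose (homogeneousSubmodule (Fin N) ℂ) s 0 : MvPolynomial (Fin N) ℂ)
      = C (eval 0 s) := by
    refine (decomposition.decompose'_apply s 0).trans ?_
    rw [homogeneousComponent_zero]
    congr 1
    rw [← constantCoeff_eq]
    exact (congrFun (congrArg DFunLike.coe (MvPolynomial.eval_zero (R := ℂ) (σ := Fin N))) s).symm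
  rw [h2] at h1
  have h3 := Ideal.mul_mem_left _ (C (eval 0 s)⁻¹) h1
  rwa [← mul_assoc, ← C_mul, inv_mul_cancel₀ hs, C_1, one_mul] at h3

lemma aux_X_regular (N : ℕ) :
    IsWeaklyRegular (MvPolynomial (Fin N) ℂ)
      (List.ofFn (fun i : Fin N => (X i : MvPolynomial (Fin N) ℂ))) := by
  rw [isWeaklyRegular_iff_Fin]
  rintro ⟨i, hi⟩
  have hi' : i < N := by simpa using hi
  rw [isSMulRegular_quotient_iff_mem_of_smul_mem]
  have e : (Ideal.ofList ((List.ofFn (fun i : Fin N => (X i : MvPolynomial (Fin N) ℂ))).take i) • ⊤ :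
      Submodule (MvPolynomial (Fin N) ℂ) (MvPolynomial (Fin N) ℂ))
      = Ideal.span (X '' {j : Fin N | (j : ℕ) < i}) := by
    rw [smul_eq_mul, Ideal.mul_top, Ideal.ofList]
    congr 1
    ext y
    simp only [Set.mem_ofPred_eq, Set.mem_image, List.mem_take_iff_getElem]
    constructor
    · rintro ⟨j, hj, rfl⟩
      simp at hj
      exact ⟨⟨j, by omega⟩, by simp; omega, by simp⟩
    · rintro ⟨j, hj, rfl⟩
      exact ⟨j, by simp; exact hj, by simp⟩
  simp only [e]
  intro x hx
  rw [mem_ideal_span_X_image] at hx ⊢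
  intro m hm
  have hm' : m + Finsupp.single ⟨i, hi'⟩ 1 ∈ ((X (⟨i, hi'⟩ : Fin N) : MvPolynomial (Fin N) ℂ) * x).support := by
    rw [mem_support_iff, mul_comm, coeff_mul_X]
    exact mem_support_iff.1 hm
  obtain ⟨l, hl, hne⟩ := hx _ (by simpa using hm')
  refine ⟨l, hl, ?_⟩
  have hl' : (l : ℕ) < i := hl
  have : (⟨i, hi'⟩ : Fin N) ≠ l := by
    rintro rfl
    simp at hl'
  simpa [Finsupp.single_apply, this] using hne

lemma aux_dim {R A : Type} [CommRing R] [CommRing A] [Algebra R A] (M : Submonoid R)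
    [IsLocalization M A] (K : Ideal R) (e : WithBot ℕ∞)
    (hK : ∀ q ∈ K.minimalPrimes, ringKrullDim (R ⧸ q) ≤ e) :
    ringKrullDim (A ⧸ K.map (algebraMap R A)) ≤ e := by
  rw [ringKrullDim_quotient]
  refine iSup_le fun l => ?_
  have hz : ∀ i, K ≤ (PrimeSpectrum.comap (algebraMap R A) (l i).1).asIdeal := fun i =>
    Ideal.map_le_iff_le_comap.1 (l i).2
  obtain ⟨q, hq, hqle⟩ := Ideal.exists_minimalPrimes_le (hz 0)
  refine le_trans ?_ (hK q hq)
  rw [ringKrullDim_quotient]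
  have hle : ∀ i, q ≤ (PrimeSpectrum.comap (algebraMap R A) (l i).1).asIdeal := fun i =>
    hqle.trans (Ideal.comap_mono (l.monotone (Fin.zero_le i)))
  let l' : LTSeries (PrimeSpectrum.zeroLocus (q : Set R)) :=
    ⟨l.length, fun i => ⟨PrimeSpectrum.comap (algebraMap R A) (l i).1, hle i⟩, fun i => by
      have h1 : l i.castSucc < l i.succ := l.step i
      have h2 : PrimeSpectrum.comap (algebraMap R A) (l i.castSucc).1 <
          PrimeSpectrum.comap (algebraMap R A) (l i.succ).1 :=
        lt_of_le_of_ne (Ideal.comap_mono h1.le) fun h => h1.ne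
          (Subtype.ext (PrimeSpectrum.localization_comap_injective A M h))
      exact h2⟩
  exact Order.LTSeries.length_le_krullDim l'

lemma aux_regular {n m : ℕ} (hmn : m ≤ n) (f : Fin m → MvPolynomial (Fin (n + 1)) ℂ)
    (hcodim_infty : ∀ p ∈ (Ideal.span (Set.range f) ⊔
        Ideal.span {(X 0 : MvPolynomial (Fin (n + 1)) ℂ)}).minimalPrimes,
      ringKrullDim (MvPolynomial (Fin (n + 1)) ℂ ⧸ p) =
        ((n - m : ℕ) : WithBot (WithTop ℕ)))
    (hf0 : ∀ j, eval 0 (f j) = 0) (φ : MvPolynomial (Fin (n + 1)) ℂ) (k : ℕ)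
    (hk : X 0 ^ k * φ ∈ Ideal.span (Set.range f)) :
    ∃ s, eval 0 s ≠ 0 ∧ s * φ ∈ Ideal.span (Set.range f) := by
  let R := MvPolynomial (Fin (n + 1)) ℂ
  let P : Ideal R := RingHom.ker (eval 0 : R →+* ℂ)
  have hP : P.IsPrime := RingHom.ker_isPrime _
  let A := Localization.AtPrime P
  have : IsNoetherianRing A := IsLocalization.isNoetherianRing P.primeCompl A inferInstance
  have hmax : ∀ y ∈ P, algebraMap R A y ∈ maximalIdeal A := fun y hy =>
    (IsLocalization.AtPrime.to_map_mem_maximal_iff A P y).2 hy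
  have hXP : ∀ i, (X i : R) ∈ P := fun i => by simp [P, RingHom.mem_ker]
  have hreg := (aux_X_regular (n + 1)).isRegular_of_isLocalization_of_mem A P (by
    intro r hr
    obtain ⟨i, rfl⟩ := List.mem_ofFn.1 hr
    exact hXP i)
  let fs : List A := (List.ofFn f).map (algebraMap R A)
  have hfs : Ideal.ofList fs = (Ideal.span (Set.range f)).map (algebraMap R A) := by
    rw [Ideal.map_span, Ideal.ofList]
    congr 1
    ext y
    simp [fs, List.mem_map, List.mem_ofFn]
  have hall : Ideal.ofList (fs ++ [algebraMap R A (X 0)]) =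
      (Ideal.span (Set.range f) ⊔ Ideal.span {(X 0 : R)}).map (algebraMap R A) := by
    rw [Ideal.ofList_append, hfs, Ideal.map_sup, Ideal.ofList_singleton,
      Ideal.map_span (algebraMap R A) {X 0}, Set.image_singleton]
  have hw : IsWeaklyRegular A (fs ++ [algebraMap R A (X 0)]) := by
    refine aux_CM _ A ?_ (n - m) ⟨_, ?_, ?_, hreg⟩ ?_
    · intro y hy
      simp only [fs, List.mem_append, List.mem_map, List.mem_ofFn, List.mem_singleton] at hy
      rcases hy with ⟨_, ⟨j, rfl⟩, rfl⟩ | rfl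
      · exact hmax _ (hf0 j)
      · exact hmax _ (hXP 0)
    · simp [fs]; omega
    · intro y hy
      obtain ⟨z, hz, rfl⟩ := List.mem_map.1 hy
      obtain ⟨i, rfl⟩ := List.mem_ofFn.1 hz
      exact hmax _ (hXP i)
    · rw [hall, smul_eq_mul, Ideal.mul_top, Module.supportDim_quotient_eq_ringKrullDim]
      exact aux_dim P.primeCompl _ _ fun q hq => (hcodim_infty q hq).le
  rw [isWeaklyRegular_append_iff, isWeaklyRegular_singleton_iff,
    isSMulRegular_quotient_iff_mem_of_smul_mem, smul_eq_mul, Ideal.mul_top, hfs] at hw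
  have hdesc : ∀ k : ℕ, algebraMap R A (X 0 ^ k * φ) ∈
      (Ideal.span (Set.range f)).map (algebraMap R A) →
      algebraMap R A φ ∈ (Ideal.span (Set.range f)).map (algebraMap R A) := by
    intro k
    induction k with
    | zero => simp
    | succ k ih =>
      intro h
      apply ih
      apply hw.2
      rw [smul_eq_mul, ← map_mul]
      convert h using 2
      ring
  have hmem := hdesc k (Ideal.mem_map_of_mem _ hk)
  obtain ⟨⟨⟨a, ha⟩, ⟨s, hs⟩⟩, hx⟩ := (IsLocalization.mem_map_algebraMap_iff P.primeCompl A).1 hmem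
  refine ⟨s, fun h0 => hs h0, ?_⟩
  rw [← map_mul] at hx
  have hinj : Function.Injective (algebraMap R A) :=
    IsLocalization.injective A P.primeCompl_le_nonZeroDivisors
  have := hinj hx
  rw [mul_comm, this]
  exact ha

end Alg

/-- Local ideal membership across the hyperplane at infinity: let `f_1,…,f_m`
(`m ≤ n`) be homogeneous polynomials on `ℂ^{n+1}`, whose projective zero set `Z` has
codimension `m` (each irreducible component of the cone has dimension `n+1−m`) and such
that `Z ∩ {z_0 = 0}` has codimension `m+1` in `ℙ^n`. If the homogeneous polynomial `φ`
of degree `r` lies in the ideal generated by `f_1,…,f_m` in the ring of germs of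
holomorphic functions at every point of the affine chart `{z_0 ≠ 0}`, then it does so at
every point of `ℂ^{n+1} \ {0}`, i.e. at every point of `ℙ^n` including `{z_0 = 0}`. -/
theorem local_membership_at_infinity (n m r : ℕ) (hmn : m ≤ n)
    (d : Fin m → ℕ) (f : Fin m → MvPolynomial (Fin (n + 1)) ℂ)
    (hf : ∀ j, (f j).IsHomogeneous (d j))
    (φ : MvPolynomial (Fin (n + 1)) ℂ) (hφ : φ.IsHomogeneous r)
    (hcodim : ∀ p ∈ (Ideal.span (Set.range f)).minimalPrimes,
      ringKrullDim (MvPolynomial (Fin (n + 1)) ℂ ⧸ p) =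
        ((n + 1 - m : ℕ) : WithBot (WithTop ℕ)))
    (hcodim_infty : ∀ p ∈ (Ideal.span (Set.range f) ⊔
        Ideal.span {(X 0 : MvPolynomial (Fin (n + 1)) ℂ)}).minimalPrimes,
      ringKrullDim (MvPolynomial (Fin (n + 1)) ℂ ⧸ p) =
        ((n - m : ℕ) : WithBot (WithTop ℕ)))
    (haffine : ∀ x : Fin (n + 1) → ℂ, x 0 ≠ 0 →
      ∃ h : Fin m → ((Fin (n + 1) → ℂ) → ℂ),
        (∀ j, AnalyticAt ℂ (h j) x) ∧
        ∀ᶠ z in nhds x, eval z φ = ∑ j, h j z * eval z (f j)) :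
    ∀ x : Fin (n + 1) → ℂ, x ≠ 0 →
      ∃ h : Fin m → ((Fin (n + 1) → ℂ) → ℂ),
        (∀ j, AnalyticAt ℂ (h j) x) ∧
        ∀ᶠ z in nhds x, eval z φ = ∑ j, h j z * eval z (f j) := by
  have hmem : φ ∈ Ideal.span (Set.range f) := by
    obtain ⟨k, hk⟩ := aux_nss (Ideal.span (Set.range f)) φ
      fun x hx => aux_local f φ x (haffine x hx)
    by_cases hf0 : ∀ j, eval 0 (f j) = 0
    · obtain ⟨s, hs, hsφ⟩ := aux_regular hmn f hcodim_infty hf0 φ k hk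
      exact aux_graded d f hf φ hφ s hs hsφ
    · push Not at hf0
      obtain ⟨j, hj⟩ := hf0
      exact aux_graded d f hf φ hφ (f j) hj
        (Ideal.mul_mem_right _ _ (Ideal.subset_span ⟨j, rfl⟩))
  obtain ⟨c, hc⟩ := Ideal.mem_span_range_iff_exists_fun.1 hmem
  intro x _
  refine ⟨fun j z => eval z (c j), fun j => ?_, Eventually.of_forall fun z => ?_⟩
  · exact AnalyticOnNhd.eval_mvPolynomial (c j) x trivial
  · rw [← hc]; simp
end
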